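/- Let n ≥ 1, T₀ > 0, and A = {(0,0,0), (0,0,T₀)} ⊆ ℍ^n. Let τ : ℍ^n → ℍ^n be the projection τ(x,y,t) = (x,0,t) (setting the y-coordinates to zero). Then for every m ≥ 1, τ(G^m(A)) ⊆ G^{m+1}(A). -/

import Mathlib

open MeasureTheory Set Real
open scoped ENNReal NNReal

noncomputable section

/-- Points of the Heisenberg group `ℍⁿ`, written `(x, y, t)` with `x, y ∈ ℝⁿ`, `t ∈ ℝ`. -/
abbrev Hpt (n : ℕ) : Type := (Fin n → ℝ) × (Fin n → ℝ) × ℝ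

/-- The projection of a point of `ℍⁿ` onto the horizontal `z = (x,y)` plane, viewed as a
point of the Euclidean space `ℝ^{2n}` (so that lengths are Euclidean lengths). -/
def hproj {n : ℕ} (p : Hpt n) : EuclideanSpace ℝ (Fin n ⊕ Fin n) :=
  (WithLp.equiv 2 ((Fin n ⊕ Fin n) → ℝ)).symm (Sum.elim p.1 p.2.1)

/-- A curve `γ` is a horizontal curve on `[a,b]` if it is (absolutely continuous, here:
Lipschitz) and almost everywhere it has a derivative `γ' = (x', y', t')` satisfying the
horizontality condition `t' = 2 ∑ⱼ (xⱼ' yⱼ - yⱼ' xⱼ)`. -/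
def IsHorizontal {n : ℕ} (γ : ℝ → Hpt n) (a b : ℝ) : Prop :=
  a ≤ b ∧ (∃ K : NNReal, LipschitzOnWith K γ (Icc a b)) ∧
    ∃ γ' : ℝ → Hpt n,
      (∀ᵐ s ∂(volume.restrict (Icc a b)), HasDerivAt γ (γ' s) s) ∧
      (∀ᵐ s ∂(volume.restrict (Icc a b)),
        (γ' s).2.2 = 2 * ∑ j, ((γ' s).1 j * (γ s).2.1 j - (γ' s).2.1 j * (γ s).1 j))

/-- The length of a horizontal curve on `[a,b]`: the Euclidean length (total variation)
of its projection to the `z`-plane `ℝ^{2n}`. -/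
def hLength {n : ℕ} (γ : ℝ → Hpt n) (a b : ℝ) : ℝ≥0∞ :=
  eVariationOn (fun s => hproj (γ s)) (Icc a b)

/-- The Carnot–Carathéodory distance: the infimum of lengths of horizontal curves
joining `p` to `q`. -/
def ccDist {n : ℕ} (p q : Hpt n) : ℝ≥0∞ :=
  ⨅ (γ : ℝ → Hpt n) (a : ℝ) (b : ℝ) (_ : IsHorizontal γ a b)
    (_ : γ a = p) (_ : γ b = q), hLength γ a b

/-- `γ` is a geodesic on `[a,b]`: a horizontal curve whose length equals the
Carnot–Carathéodory distance between its endpoints. -/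
def IsGeodesicOn {n : ℕ} (γ : ℝ → Hpt n) (a b : ℝ) : Prop :=
  IsHorizontal γ a b ∧ hLength γ a b = ccDist (γ a) (γ b)

/-- A set `A ⊆ ℍⁿ` is geodetically convex if every geodesic connecting any two points of
`A` lies in `A`. -/
def GeodConvexSet {n : ℕ} (A : Set (Hpt n)) : Prop :=
  ∀ p ∈ A, ∀ q ∈ A, ∀ (γ : ℝ → Hpt n) (a b : ℝ),
    IsGeodesicOn γ a b → γ a = p → γ b = q → ∀ s ∈ Icc a b, γ s ∈ A

/-- A function `u : ℍⁿ → ℝ` is geodetically convex if its composition with every geodesic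
is convex. -/
def GeodConvexFun {n : ℕ} (u : Hpt n → ℝ) : Prop :=
  ∀ (γ : ℝ → Hpt n) (a b : ℝ), IsGeodesicOn γ a b → ConvexOn ℝ (Icc a b) (u ∘ γ)

/-- The union of the images of all geodesics connecting pairs of points of `S`. -/
def geodJoin {n : ℕ} (S : Set (Hpt n)) : Set (Hpt n) :=
  {z | ∃ p ∈ S, ∃ q ∈ S, ∃ (γ : ℝ → Hpt n) (a b : ℝ),
    IsGeodesicOn γ a b ∧ γ a = p ∧ γ b = q ∧ z ∈ γ '' Icc a b}

/-- The iterated geodesic hulls `G^m(A)`, with `G^0(A) = A`. -/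
def Gm {n : ℕ} (A : Set (Hpt n)) : ℕ → Set (Hpt n)
  | 0 => A
  | (m + 1) => geodJoin (Gm A m)

/-! In the coordinates `z = x + iy` horizontality reads `t' = 2 Im ⟨z', z⟩`, so unitary maps of
`ℂⁿ` act on `ℍⁿ` as length-preserving automorphisms, and `G^m(A)` is rotation invariant as soon as
`A` is. With a point `p = (z, t)` it therefore contains every `(z', t)` with `|z'| = |z|`, in
particular each such `(z', t)` together with `(-z', t)`. The straight segment joining these two is
horizontal, hence a geodesic, and lies in `G^(m+1)(A)`. As `z'` varies, such segments fill the disc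
of radius `|z|` at height `t`, and `τ(p)` lies in that disc. -/

section InnerProductSpace

variable {𝕜 E : Type*} [RCLike 𝕜] [NormedAddCommGroup E] [InnerProductSpace 𝕜 E]
  [FiniteDimensional 𝕜 E] {u v : E}

lemma exists_linearIsometryEquiv_apply_eq (h : ‖u‖ = ‖v‖) : ∃ U : E ≃ₗᵢ[𝕜] E, U u = v := by
  by_cases hu : u = 0
  · obtain rfl : v = 0 := by simpa [hu, eq_comm] using h
    exact ⟨.refl 𝕜 E, hu⟩
  let f : (𝕜 ∙ u) →ₗ[𝕜] E :=
    LinearMap.toSpanSingleton 𝕜 E v ∘ₗ (LinearEquiv.coord 𝕜 E u hu).toLinearMap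
  have hf_norm (y : 𝕜 ∙ u) : ‖f y‖ = ‖y‖ := by
    have hy : ‖y‖ = ‖LinearEquiv.coord 𝕜 E u hu y • u‖ := by
      rw [LinearEquiv.coord_apply_smul, Submodule.coe_norm]
    rw [hy, norm_smul, h, ← norm_smul]
    rfl
  let L : (𝕜 ∙ u) →ₗᵢ[𝕜] E := ⟨f, hf_norm⟩
  refine ⟨L.extend.toLinearIsometryEquiv rfl, ?_⟩
  calc L.extend u = f ⟨u, Submodule.mem_span_singleton_self u⟩ := L.extend_apply ⟨u, _⟩
    _ = LinearEquiv.coord 𝕜 E u hu ⟨u, Submodule.mem_span_singleton_self u⟩ • v := rfl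
    _ = v := by rw [LinearEquiv.coord_self, one_smul]

lemma exists_smul_linearIsometryEquiv_apply_eq (h : ‖v‖ ≤ ‖u‖) :
    ∃ U : E ≃ₗᵢ[𝕜] E, ∃ s ∈ Icc (0 : ℝ) 1, (s : 𝕜) • U u = v := by
  by_cases hv : v = 0
  · exact ⟨.refl 𝕜 E, 0, by simp, by simp [hv]⟩
  have hv_pos : 0 < ‖v‖ := norm_pos_iff.2 hv
  have hu_pos : 0 < ‖u‖ := hv_pos.trans_le h
  have h_norm : ‖u‖ = ‖((‖u‖ / ‖v‖ : ℝ) : 𝕜) • v‖ := by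
    rw [norm_smul, RCLike.norm_ofReal, abs_of_pos (by positivity), div_mul_cancel₀ _ hv_pos.ne']
  obtain ⟨U, hU⟩ := exists_linearIsometryEquiv_apply_eq (𝕜 := 𝕜) h_norm
  refine ⟨U, ‖v‖ / ‖u‖, ⟨by positivity, (div_le_one hu_pos).2 h⟩, ?_⟩
  rw [hU, smul_smul, ← RCLike.ofReal_mul, div_mul_div_cancel₀ hu_pos.ne', div_self hv_pos.ne',
    RCLike.ofReal_one, one_smul]

end InnerProductSpace

lemma eVariationOn_congr_edist {α E F : Type*} [LinearOrder α] [PseudoEMetricSpace E]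
    [PseudoEMetricSpace F] {f : α → E} {g : α → F} {s : Set α}
    (h : ∀ x ∈ s, ∀ y ∈ s, edist (f x) (f y) = edist (g x) (g y)) :
    eVariationOn f s = eVariationOn g s :=
  iSup_congr fun u ↦ Finset.sum_congr rfl fun _ _ ↦ h _ (u.2.2.2 _) _ (u.2.2.2 _)

lemma eVariationOn_smul_const_Icc {E : Type*} [SeminormedAddCommGroup E] [NormedSpace ℝ E]
    (v : E) {a b : ℝ} (hab : a ≤ b) :
    eVariationOn (fun s : ℝ ↦ s • v) (Icc a b) = edist (a • v) (b • v) := by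
  refine le_antisymm ?_
    (eVariationOn.edist_le (fun s : ℝ ↦ s • v) (left_mem_Icc.2 hab) (right_mem_Icc.2 hab))
  have h_lip : LipschitzWith ‖v‖₊ (fun s : ℝ ↦ s • v) := fun s t ↦ by
    rw [edist_eq_enorm_sub, edist_eq_enorm_sub, ← sub_smul, enorm_smul, mul_comm, enorm_eq_nnnorm v]
  calc eVariationOn (fun s : ℝ ↦ s • v) (Icc a b)
      ≤ ‖v‖₊ * eVariationOn id (Icc a b) :=
        h_lip.lipschitzOnWith.comp_eVariationOn_le (mapsTo_univ _ _)
    _ = ‖v‖ₑ * ‖b - a‖ₑ := by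
        rw [eVariationOn_id_Icc, Real.enorm_of_nonneg (sub_nonneg.2 hab), enorm_eq_nnnorm]
    _ = edist (a • v) (b • v) := by
        rw [edist_comm, edist_eq_enorm_sub, ← sub_smul, enorm_smul, mul_comm]

variable {n : ℕ} {γ : ℝ → Hpt n} {a b : ℝ} {p q : Hpt n} {A : Set (Hpt n)}

lemma le_ccDist_iff {c : ℝ≥0∞} :
    c ≤ ccDist p q ↔
      ∀ γ a b, IsHorizontal γ a b → γ a = p → γ b = q → c ≤ hLength γ a b := by
  simp only [ccDist, le_iInf_iff]

lemma IsHorizontal.ccDist_le_hLength (h : IsHorizontal γ a b) :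
    ccDist (γ a) (γ b) ≤ hLength γ a b :=
  le_ccDist_iff.1 le_rfl γ a b h rfl rfl

lemma edist_hproj_le_ccDist (p q : Hpt n) : edist (hproj p) (hproj q) ≤ ccDist p q := by
  rw [le_ccDist_iff]
  rintro γ a b h rfl rfl
  exact eVariationOn.edist_le (fun s ↦ hproj (γ s)) (left_mem_Icc.2 h.1) (right_mem_Icc.2 h.1)

lemma IsHorizontal.isGeodesicOn (h : IsHorizontal γ a b)
    (h_len : hLength γ a b = edist (hproj (γ a)) (hproj (γ b))) : IsGeodesicOn γ a b :=
  ⟨h, (h_len.trans_le (edist_hproj_le_ccDist _ _)).antisymm h.ccDist_le_hLength⟩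

/-- The horizontal line through `p` that meets the vertical axis, with parameter `0` on the axis
and `1` at `p`; it is constant if `p` itself lies on the axis. -/
def radialLine (p : Hpt n) (s : ℝ) : Hpt n := (s • p.1, s • p.2.1, p.2.2)

lemma hproj_radialLine (p : Hpt n) (s : ℝ) : hproj (radialLine p s) = s • hproj p := by
  ext (j | j) <;> simp [hproj, radialLine]

lemma hasDerivAt_radialLine (p : Hpt n) (s : ℝ) :
    HasDerivAt (radialLine p) (p.1, p.2.1, 0) s := by
  have h_smul (x : Fin n → ℝ) : HasDerivAt (fun s : ℝ ↦ s • x) x s := by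
    simpa using (hasDerivAt_id s).smul_const x
  exact (h_smul p.1).prodMk ((h_smul p.2.1).prodMk (hasDerivAt_const s p.2.2))

lemma isHorizontal_radialLine (p : Hpt n) (hab : a ≤ b) : IsHorizontal (radialLine p) a b := by
  have h_lip : LipschitzWith ‖((p.1, p.2.1, 0) : Hpt n)‖₊ (radialLine p) :=
    lipschitzWith_of_nnnorm_deriv_le (fun s ↦ (hasDerivAt_radialLine p s).differentiableAt)
      fun s ↦ by rw [(hasDerivAt_radialLine p s).deriv]
  refine ⟨hab, ⟨_, h_lip.lipschitzOnWith⟩, fun _ ↦ (p.1, p.2.1, 0),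
    .of_forall (hasDerivAt_radialLine p), .of_forall fun s ↦ ?_⟩
  have h_cancel (j : Fin n) : p.1 j * (s * p.2.1 j) - p.2.1 j * (s * p.1 j) = 0 := by ring
  simp [radialLine, h_cancel]

lemma isGeodesicOn_radialLine (p : Hpt n) (hab : a ≤ b) : IsGeodesicOn (radialLine p) a b := by
  refine (isHorizontal_radialLine p hab).isGeodesicOn ?_
  simp only [hLength, hproj_radialLine]
  exact eVariationOn_smul_const_Icc (hproj p) hab

lemma radialLine_mem_geodJoin {s : ℝ} (hp : p ∈ A) (hp_neg : radialLine p (-1) ∈ A)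
    (hs : s ∈ Icc (-1 : ℝ) 1) : radialLine p s ∈ geodJoin A :=
  ⟨_, hp_neg, p, hp, radialLine p, -1, 1, isGeodesicOn_radialLine p (by norm_num), rfl,
    by simp [radialLine], mem_image_of_mem _ hs⟩

/-- The coordinates `(z, t)` on `ℍⁿ`, where `z = x + iy ∈ ℂⁿ`. -/
def complexCoords (n : ℕ) : Hpt n ≃L[ℝ] EuclideanSpace ℂ (Fin n) × ℝ :=
  LinearEquiv.toContinuousLinearEquiv
    { toFun := fun p ↦ (WithLp.toLp 2 fun j ↦ ⟨p.1 j, p.2.1 j⟩, p.2.2)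
      invFun := fun w ↦ (fun j ↦ (w.1 j).re, fun j ↦ (w.1 j).im, w.2)
      map_add' := fun p q ↦ Prod.ext (by ext j; apply Complex.ext <;> simp) rfl
      map_smul' := fun c p ↦ Prod.ext (by ext j; apply Complex.ext <;> simp) rfl
      left_inv := fun _ ↦ rfl
      right_inv := fun _ ↦ rfl }

lemma complexCoords_fst_apply (p : Hpt n) (j : Fin n) :
    (complexCoords n p).1 j = ⟨p.1 j, p.2.1 j⟩ := rfl

lemma complexCoords_snd (p : Hpt n) : (complexCoords n p).2 = p.2.2 := rfl

lemma complexCoords_radialLine (p : Hpt n) (s : ℝ) :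
    complexCoords n (radialLine p s) = (s • (complexCoords n p).1, p.2.2) :=
  Prod.ext (by ext j; apply Complex.ext <;> simp [complexCoords_fst_apply, radialLine]) rfl

lemma norm_complexCoords_fst (p : Hpt n) : ‖(complexCoords n p).1‖ = ‖hproj p‖ := by
  simp [EuclideanSpace.norm_eq, complexCoords_fst_apply, hproj, Complex.sq_norm,
    Complex.normSq_apply, Finset.sum_add_distrib, ← sq]

lemma edist_complexCoords_fst (p q : Hpt n) :
    edist (complexCoords n p).1 (complexCoords n q).1 = edist (hproj p) (hproj q) := by
  have h_sub : hproj (p - q) = hproj p - hproj q := by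
    ext (j | j) <;> simp [hproj]
  rw [edist_dist, edist_dist, dist_eq_norm, dist_eq_norm, ← h_sub, ← norm_complexCoords_fst,
    map_sub, Prod.fst_sub]

lemma im_inner_complexCoords_fst (p q : Hpt n) :
    (inner ℂ (complexCoords n p).1 (complexCoords n q).1).im =
      ∑ j, (p.1 j * q.2.1 j - p.2.1 j * q.1 j) := by
  rw [PiLp.inner_apply, Complex.im_sum]
  refine Finset.sum_congr rfl fun j _ ↦ ?_
  simp only [complexCoords_fst_apply, RCLike.inner_apply, Complex.mul_im, Complex.conj_re,
    Complex.conj_im]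
  ring

/-- The action `(z, t) ↦ (U z, t)` of a unitary map `U` of `ℂⁿ` on `ℍⁿ`. -/
def rotate (U : EuclideanSpace ℂ (Fin n) ≃ₗᵢ[ℂ] EuclideanSpace ℂ (Fin n)) :
    Hpt n ≃L[ℝ] Hpt n :=
  (complexCoords n).trans <|
    ((U.toContinuousLinearEquiv.restrictScalars ℝ).prodCongr (.refl ℝ ℝ)).trans
      (complexCoords n).symm

section Rotate

variable (U : EuclideanSpace ℂ (Fin n) ≃ₗᵢ[ℂ] EuclideanSpace ℂ (Fin n))

lemma complexCoords_rotate (p : Hpt n) :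
    complexCoords n (rotate U p) = (U (complexCoords n p).1, p.2.2) :=
  (complexCoords n).apply_symm_apply _

lemma rotate_symm_rotate (p : Hpt n) : rotate U.symm (rotate U p) = p := by
  apply (complexCoords n).injective
  rw [complexCoords_rotate, complexCoords_rotate, U.symm_apply_apply]
  rfl

lemma rotate_neg (p : Hpt n) : rotate (.neg ℂ) p = radialLine p (-1) := by
  apply (complexCoords n).injective
  simp [complexCoords_rotate, complexCoords_radialLine]

lemma rotate_eq_self (hp : hproj p = 0) : rotate U p = p := by
  have hz : (complexCoords n p).1 = 0 := by
    rw [← norm_eq_zero, norm_complexCoords_fst, hp, norm_zero]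
  apply (complexCoords n).injective
  rw [complexCoords_rotate, hz, map_zero, ← hz, ← complexCoords_snd]

lemma hLength_rotate (γ : ℝ → Hpt n) (a b : ℝ) :
    hLength (fun s ↦ rotate U (γ s)) a b = hLength γ a b :=
  eVariationOn_congr_edist fun s _ t _ ↦ by
    simp only [← edist_complexCoords_fst, complexCoords_rotate, U.edist_map]

lemma IsHorizontal.rotate_comp (h : IsHorizontal γ a b) :
    IsHorizontal (fun s ↦ rotate U (γ s)) a b := by
  obtain ⟨hab, ⟨K, h_lip⟩, γ', h_deriv, h_contact⟩ := h
  refine ⟨hab, ⟨_, (rotate U).lipschitz.comp_lipschitzOnWith h_lip⟩,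
    fun s ↦ rotate U (γ' s), ?_, ?_⟩
  · filter_upwards [h_deriv] with s hs
    exact (rotate U).hasFDerivAt.comp_hasDerivAt s hs
  · filter_upwards [h_contact] with s hs
    rw [← im_inner_complexCoords_fst, complexCoords_rotate, complexCoords_rotate,
      U.inner_map_map, im_inner_complexCoords_fst, ← hs, ← complexCoords_snd, complexCoords_rotate]

lemma ccDist_rotate_le (p q : Hpt n) : ccDist (rotate U p) (rotate U q) ≤ ccDist p q := by
  rw [le_ccDist_iff]
  rintro γ a b h rfl rfl
  exact (h.rotate_comp U).ccDist_le_hLength.trans_eq (hLength_rotate U γ a b)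

lemma ccDist_rotate (p q : Hpt n) : ccDist (rotate U p) (rotate U q) = ccDist p q :=
  (ccDist_rotate_le U p q).antisymm <| by
    simpa only [rotate_symm_rotate] using ccDist_rotate_le U.symm (rotate U p) (rotate U q)

lemma IsGeodesicOn.rotate_comp (h : IsGeodesicOn γ a b) :
    IsGeodesicOn (fun s ↦ rotate U (γ s)) a b :=
  ⟨h.1.rotate_comp U, by rw [hLength_rotate, ccDist_rotate, h.2]⟩

lemma mapsTo_rotate_geodJoin (hA : MapsTo (rotate U) A A) :
    MapsTo (rotate U) (geodJoin A) (geodJoin A) := by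
  rintro _ ⟨_, ha, _, hb, γ, a, b, hγ, rfl, rfl, s, hs, rfl⟩
  exact ⟨_, hA ha, _, hA hb, fun s ↦ rotate U (γ s), a, b, hγ.rotate_comp U, rfl, rfl, s, hs, rfl⟩

lemma mapsTo_rotate_Gm (hA : MapsTo (rotate U) A A) (m : ℕ) :
    MapsTo (rotate U) (Gm A m) (Gm A m) := by
  induction m with
  | zero => exact hA
  | succ m ih => exact mapsTo_rotate_geodJoin U ih

lemma mapsTo_rotate_of_hproj_eq_zero (hA : ∀ p ∈ A, hproj p = 0) : MapsTo (rotate U) A A :=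
  fun p hp ↦ by rwa [rotate_eq_self U (hA p hp)]

end Rotate

lemma exists_radialLine_rotate_eq (hz : ‖hproj q‖ ≤ ‖hproj p‖) (ht : q.2.2 = p.2.2) :
    ∃ U, ∃ s ∈ Icc (0 : ℝ) 1, radialLine (rotate U p) s = q := by
  rw [← norm_complexCoords_fst, ← norm_complexCoords_fst] at hz
  obtain ⟨U, s, hs, hU⟩ := exists_smul_linearIsometryEquiv_apply_eq (𝕜 := ℂ) hz
  refine ⟨U, s, hs, (complexCoords n).injective ?_⟩
  rw [complexCoords_radialLine, ← complexCoords_snd, complexCoords_rotate, ← ht]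
  exact Prod.ext hU rfl

lemma hproj_zero_zero (t : ℝ) : hproj ((0, 0, t) : Hpt n) = 0 := by
  ext (j | j) <;> rfl

lemma norm_hproj_zero_snd_le (p : Hpt n) : ‖hproj (p.1, 0, p.2.2)‖ ≤ ‖hproj p‖ := by
  simp only [EuclideanSpace.norm_eq, Fintype.sum_sum_type]
  gcongr <;> simp [hproj]

theorem stmt_9_general (hA : ∀ U, MapsTo (rotate U) A A) {m : ℕ} (hp : p ∈ Gm A m)
    (hz : ‖hproj q‖ ≤ ‖hproj p‖) (ht : q.2.2 = p.2.2) : q ∈ Gm A (m + 1) := by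
  obtain ⟨U, s, hs, rfl⟩ := exists_radialLine_rotate_eq hz ht
  have h_rotate : rotate U p ∈ Gm A m := mapsTo_rotate_Gm U (hA U) m hp
  have h_antipode : radialLine (rotate U p) (-1) ∈ Gm A m := by
    rw [← rotate_neg]
    exact mapsTo_rotate_Gm (.neg ℂ) (hA _) m h_rotate
  exact radialLine_mem_geodJoin h_rotate h_antipode ⟨by linarith [hs.1], hs.2⟩

/-- For the projection `τ(x,y,t) = (x,0,t)`, one has
`τ(G^m(A)) ⊆ G^{m+1}(A)` for all `m ≥ 1`. -/
theorem stmt_9 (n : ℕ) (hn : 1 ≤ n) (T₀ : ℝ) (hT : 0 < T₀) (m : ℕ) (hm : 1 ≤ m) :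
    (fun p : Hpt n => (p.1, (0 : Fin n → ℝ), p.2.2)) ''
        Gm ({((0 : Fin n → ℝ), (0 : Fin n → ℝ), (0 : ℝ)),
          ((0 : Fin n → ℝ), (0 : Fin n → ℝ), T₀)} : Set (Hpt n)) m
      ⊆ Gm ({((0 : Fin n → ℝ), (0 : Fin n → ℝ), (0 : ℝ)),
          ((0 : Fin n → ℝ), (0 : Fin n → ℝ), T₀)} : Set (Hpt n)) (m + 1) := by
  rintro _ ⟨p, hp, rfl⟩
  refine stmt_9_general (fun U ↦ mapsTo_rotate_of_hproj_eq_zero U ?_) hp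
    (norm_hproj_zero_snd_le p) rfl
  simp [hproj_zero_zero]
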